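/- Let f : ℝ^d → ℝ be convex and L-smooth (differentiable with L-Lipschitz gradient, L > 0). Let E be a positive integer, let w_0 ∈ ℝ^d, define gradient-descent iterates w_{τ+1} = w_τ − η ∇f(w_τ), and assume η L E ≤ 1/4. Then the update u := Σ_{τ=0}^{E−1} ∇f(w_τ) satisfies ‖u‖² ≥ (7 E²/32) ‖∇f(w_0)‖². -/

import Mathlib

/-!
The gradient drifts little over `E` steps. One step moves the iterate by `η ‖∇f(w_τ)‖`, so
smoothness gives `‖∇f(w_{τ+1}) - ∇f(w_τ)‖ ≤ ηL ‖∇f(w_τ)‖`, and induction on `τ ≤ E` yields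
`‖∇f(w_τ) - ∇f(w_0)‖ ≤ (4/3) ηL τ ‖∇f(w_0)‖ ≤ (1/3) ‖∇f(w_0)‖` (`gradient_drift`). Summing,
`‖u - E ∇f(w_0)‖ ≤ (E/3) ‖∇f(w_0)‖`, hence `‖u‖ ≥ (2E/3) ‖∇f(w_0)‖`, and `4/9 ≥ 7/32`.
-/

open scoped RealInnerProductSpace

/-- A sequence whose increments are at most `x` times its current size drifts at most linearly,
with rate `(4/3) x`, as long as `x * E ≤ 1/4`. -/
lemma gradient_drift {V : Type*} [NormedAddCommGroup V] (g : ℕ → V) (x : ℝ) (hx : 0 ≤ x)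
    (E : ℕ) (hxE : x * E ≤ 1 / 4) (hg : ∀ τ, ‖g (τ + 1) - g τ‖ ≤ x * ‖g τ‖) :
    ∀ τ ≤ E, ‖g τ - g 0‖ ≤ 4 / 3 * (x * τ) * ‖g 0‖ := by
  intro τ
  induction τ with
  | zero => simp
  | succ k ih =>
    intro hk
    have ih' := ih (by omega)
    have hkE : (k : ℝ) ≤ E := by exact_mod_cast (by omega : k ≤ E)
    have hxk : x * k ≤ 1 / 4 := (mul_le_mul_of_nonneg_left hkE hx).trans hxE
    have hG := norm_nonneg (g 0)
    have hdrift : ‖g k - g 0‖ ≤ 1 / 3 * ‖g 0‖ :=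
      ih'.trans (mul_le_mul_of_nonneg_right (by linarith) hG)
    have hsize : ‖g k‖ ≤ 4 / 3 * ‖g 0‖ := by
      have := norm_le_norm_add_norm_sub' (g k) (g 0)
      linarith
    -- The rate 4/3 is the fixed point of `c = 1 + c / 4`, so the step reproduces it exactly.
    calc ‖g (k + 1) - g 0‖ ≤ ‖g (k + 1) - g k‖ + ‖g k - g 0‖ :=
        norm_sub_le_norm_sub_add_norm_sub _ _ _
      _ ≤ x * (4 / 3 * ‖g 0‖) + 4 / 3 * (x * k) * ‖g 0‖ :=
        add_le_add ((hg k).trans (mul_le_mul_of_nonneg_left hsize hx)) ih'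
      _ = 4 / 3 * (x * ((k + 1 : ℕ) : ℝ)) * ‖g 0‖ := by push_cast; ring

/-- Appendix C (proof of Theorem 4.2): lower bound on the update norm in terms
of the initial gradient norm. -/
theorem stmt_13 {d : ℕ} (f : EuclideanSpace ℝ (Fin d) → ℝ) (L : ℝ) (hL : 0 < L)
    (hconv : ConvexOn ℝ Set.univ f)
    (hdiff : Differentiable ℝ f)
    (hlip : ∀ x y, ‖gradient f x - gradient f y‖ ≤ L * ‖x - y‖)
    (E : ℕ) (hE : 0 < E)
    (η : ℝ) (hη0 : 0 < η) (hη : η * L * (E : ℝ) ≤ 1 / 4)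
    (w : ℕ → EuclideanSpace ℝ (Fin d))
    (hw : ∀ τ, w (τ + 1) = w τ - η • gradient f (w τ)) :
    ‖∑ τ ∈ Finset.range E, gradient f (w τ)‖ ^ 2 ≥
      (7 * (E : ℝ) ^ 2 / 32) * ‖gradient f (w 0)‖ ^ 2 := by
  have hx : 0 ≤ η * L := by positivity
  have hstep : ∀ τ, ‖gradient f (w (τ + 1)) - gradient f (w τ)‖
      ≤ η * L * ‖gradient f (w τ)‖ := by
    intro τ
    refine (hlip _ _).trans_eq ?_
    rw [hw τ, sub_sub_cancel_left, norm_neg, norm_smul, Real.norm_of_nonneg hη0.le]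
    ring
  have hdrift := gradient_drift (fun τ => gradient f (w τ)) (η * L) hx E hη hstep
  set G := ‖gradient f (w 0)‖ with hGdef
  have hG : 0 ≤ G := norm_nonneg _
  have hdev : ‖∑ τ ∈ Finset.range E, gradient f (w τ) - (E : ℝ) • gradient f (w 0)‖
      ≤ E * (1 / 3 * G) := by
    have hsum : ∑ τ ∈ Finset.range E, gradient f (w τ) - (E : ℝ) • gradient f (w 0)
        = ∑ τ ∈ Finset.range E, (gradient f (w τ) - gradient f (w 0)) := by
      rw [Finset.sum_sub_distrib, Finset.sum_const, Finset.card_range, Nat.cast_smul_eq_nsmul]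
    rw [hsum]
    refine (norm_sum_le_of_le (f := fun τ => gradient f (w τ) - gradient f (w 0))
      (n := fun _ => 1 / 3 * G) _ fun τ hτ => ?_).trans_eq (by simp)
    have hτE := (Finset.mem_range.mp hτ).le
    have hcast : (τ : ℝ) ≤ E := by exact_mod_cast hτE
    have := (mul_le_mul_of_nonneg_left hcast hx).trans hη
    exact (hdrift τ hτE).trans (mul_le_mul_of_nonneg_right (by linarith) hG)
  have hlow : 2 / 3 * (E * G) ≤ ‖∑ τ ∈ Finset.range E, gradient f (w τ)‖ := by
    have h := norm_le_norm_add_norm_sub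
      (∑ τ ∈ Finset.range E, gradient f (w τ)) ((E : ℝ) • gradient f (w 0))
    rw [norm_smul, Real.norm_natCast] at h
    linarith
  have hsq := pow_le_pow_left₀ (by positivity) hlow 2
  nlinarith [sq_nonneg ((E : ℝ) * G)]
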